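/- All involutions of Ree(q) are conjugate in Ree(q), and every involution of Ree(q) fixes exactly q + 1 points of O. -/

import Mathlib

/-!
The set `O` is cut out by polynomial equations in a vector and its image under the inverse Tits
automorphism, and these are symmetric under reversing the coordinates; hence `O` is preserved by `Υ`
as well as by the root elements. The group also preserves the cross product of the trace-zero
octonions and is 2-transitive on `O`. Consider the stabilizer of `P∞` and `P0`: an element of it
lies in a Levi subgroup `GL₂` of `G₂` and, because it preserves `O`, it is some `h(λ)`. An
involution moves a point of `O`, so it is conjugate to one that swaps `P∞` and `P0`, that is, to
some `h(λ)Υ`. Conjugation by `h(u)` multiplies `λ` by `u²` and `-1` is not a square, so one may take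
`λ = ±1`; both `Υ` and `h(-1)Υ` are conjugate to `h(-1)`, already over `𝔽₃`. Finally `h(-1)` acts on
`O` by `(a, b, c) ↦ (-a, b, -c)`, so it fixes `P∞` and the `q` points with parameters `(0, b, 0)`.
-/

open Matrix

noncomputable section

namespace ReePaper

variable {F : Type*} [Field F] [Fintype F]

/-- The matrix `α(x)`. -/
def amat (t : ℕ) (x : F) : Matrix (Fin 7) (Fin 7) F :=
  !![1, x^t, 0, 0, -x^(3*t+1), -x^(3*t+2), x^(4*t+2);
     0, 1, x, x^(t+1), -x^(2*t+1), 0, -x^(3*t+2);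
     0, 0, 1, x^t, -x^(2*t), 0, x^(3*t+1);
     0, 0, 0, 1, x^t, 0, 0;
     0, 0, 0, 0, 1, -x, x^(t+1);
     0, 0, 0, 0, 0, 1, -x^t;
     0, 0, 0, 0, 0, 0, 1]

/-- The matrix `β(x)`. -/
def bmat (t : ℕ) (x : F) : Matrix (Fin 7) (Fin 7) F :=
  !![1, 0, -x^t, 0, -x, 0, -x^(t+1);
     0, 1, 0, x^t, 0, -x^(2*t), 0;
     0, 0, 1, 0, 0, 0, x;
     0, 0, 0, 1, 0, x^t, 0;
     0, 0, 0, 0, 1, 0, x^t;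
     0, 0, 0, 0, 0, 1, 0;
     0, 0, 0, 0, 0, 0, 1]

/-- The matrix `γ(x)`. -/
def cmat (t : ℕ) (x : F) : Matrix (Fin 7) (Fin 7) F :=
  !![1, 0, 0, -x^t, 0, -x, -x^(2*t);
     0, 1, 0, 0, -x^t, 0, x;
     0, 0, 1, 0, 0, x^t, 0;
     0, 0, 0, 1, 0, 0, -x^t;
     0, 0, 0, 0, 1, 0, 0;
     0, 0, 0, 0, 0, 1, 0;
     0, 0, 0, 0, 0, 0, 1]

/-- The diagonal matrix `h(λ)`. -/
def hmat (t : ℕ) (l : Fˣ) : Matrix (Fin 7) (Fin 7) F :=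
  Matrix.diagonal ![((l ^ (t : ℤ) : Fˣ) : F), ((l ^ (1 - (t : ℤ)) : Fˣ) : F),
    ((l ^ (2 * (t : ℤ) - 1) : Fˣ) : F), 1, ((l ^ (1 - 2 * (t : ℤ)) : Fˣ) : F),
    ((l ^ ((t : ℤ) - 1) : Fˣ) : F), ((l ^ (-(t : ℤ)) : Fˣ) : F)]

/-- The matrix `Υ`, the antidiagonal matrix with all entries `-1`. -/
def ups : Matrix (Fin 7) (Fin 7) F :=
  !![0, 0, 0, 0, 0, 0, -1;
     0, 0, 0, 0, 0, -1, 0;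
     0, 0, 0, 0, -1, 0, 0;
     0, 0, 0, -1, 0, 0, 0;
     0, 0, -1, 0, 0, 0, 0;
     0, -1, 0, 0, 0, 0, 0;
     -1, 0, 0, 0, 0, 0, 0]

/-- `S(a, b, c) = α(a) β(b) γ(c)`. -/
def Smat (t : ℕ) (a b c : F) : Matrix (Fin 7) (Fin 7) F :=
  amat t a * bmat t b * cmat t c

/-- The Ree group `Ree(q) = ⟨α(x), β(x), γ(x), h(λ), Υ⟩ ≤ GL(7, q)`. -/
def ReeGroup (t : ℕ) : Subgroup (GL (Fin 7) F) :=
  Subgroup.closure {g : GL (Fin 7) F |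
    (∃ x : F, (g : Matrix (Fin 7) (Fin 7) F) = amat t x) ∨
    (∃ x : F, (g : Matrix (Fin 7) (Fin 7) F) = bmat t x) ∨
    (∃ x : F, (g : Matrix (Fin 7) (Fin 7) F) = cmat t x) ∨
    (∃ l : Fˣ, (g : Matrix (Fin 7) (Fin 7) F) = hmat t l) ∨
    (g : Matrix (Fin 7) (Fin 7) F) = ups}

/-- The subgroup `U(q) = ⟨α(x), β(x), γ(x)⟩`. -/
def Usub (t : ℕ) : Subgroup (GL (Fin 7) F) :=
  Subgroup.closure {g : GL (Fin 7) F |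
    (∃ x : F, (g : Matrix (Fin 7) (Fin 7) F) = amat t x) ∨
    (∃ x : F, (g : Matrix (Fin 7) (Fin 7) F) = bmat t x) ∨
    (∃ x : F, (g : Matrix (Fin 7) (Fin 7) F) = cmat t x)}

/-- The subgroup `H(q) = {h(λ) : λ ∈ F_q^×}`. -/
def Hsub (t : ℕ) : Subgroup (GL (Fin 7) F) :=
  Subgroup.closure {g : GL (Fin 7) F |
    ∃ l : Fˣ, (g : Matrix (Fin 7) (Fin 7) F) = hmat t l}

/-- The right action of an element of `GL(7, F)` on the projective space `P^6(F)`
of the row vector space `F^7`. -/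
def ptAct (g : GL (Fin 7) F) (P : Projectivization F (Fin 7 → F)) :
    Projectivization F (Fin 7 → F) :=
  Projectivization.map (Matrix.vecMulLinear (g : Matrix (Fin 7) (Fin 7) F))
    (by
      intro u v huv
      simp only [Matrix.vecMulLinear_apply] at huv
      have h2 : u ᵥ* ((g : Matrix (Fin 7) (Fin 7) F) * ((g⁻¹ : GL (Fin 7) F) : Matrix (Fin 7) (Fin 7) F))
          = v ᵥ* ((g : Matrix (Fin 7) (Fin 7) F) * ((g⁻¹ : GL (Fin 7) F) : Matrix (Fin 7) (Fin 7) F)) := by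
        rw [← Matrix.vecMul_vecMul, ← Matrix.vecMul_vecMul, huv]
      rwa [g.mul_inv, Matrix.vecMul_one, Matrix.vecMul_one] at h2) P

/-- The point `P∞ = (0 : 0 : 0 : 0 : 0 : 0 : 1)`. -/
def Pinf : Projectivization F (Fin 7 → F) :=
  Projectivization.mk F ![0, 0, 0, 0, 0, 0, 1]
    (by
      intro h
      have h1 : (1 : F) = 0 := by
        have := congrFun h 6
        rwa [show (![0, 0, 0, 0, 0, 0, 1] : Fin 7 → F) 6 = 1 from rfl] at this
      exact one_ne_zero h1)

/-- The point `P0 = (1 : 0 : 0 : 0 : 0 : 0 : 0)`. -/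
def Pzero : Projectivization F (Fin 7 → F) :=
  Projectivization.mk F ![1, 0, 0, 0, 0, 0, 0]
    (by intro h; have := congrFun h 0; simp at this)

/-- The representative vector of the point of `O` with parameters `a, b, c`. -/
def oVec (t : ℕ) (a b c : F) : Fin 7 → F :=
  ![1, a^t, -b^t, (a*b)^t - c^t, -b - a^(3*t+1) - (a*c)^t,
    -c - (b*c)^t - a^(3*t+2) - a^t * b^(2*t),
    a^t * c - b^(t+1) + a^(4*t+2) - c^(2*t) - a^(3*t+1) * b^t - (a*b*c)^t]

lemma oVec_ne_zero (t : ℕ) (a b c : F) : oVec t a b c ≠ 0 := by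
  intro h
  have h1 : (1 : F) = 0 := by
    have := congrFun h 0
    rwa [show oVec t a b c 0 = 1 from rfl] at this
  exact one_ne_zero h1

/-- The set `O ⊆ P^6(F_q)` on which `Ree(q)` acts doubly transitively. -/
def Oset (t : ℕ) : Set (Projectivization F (Fin 7 → F)) :=
  {Pinf} ∪ {P | ∃ a b c : F, P = Projectivization.mk F (oVec t a b c) (oVec_ne_zero t a b c)}

end ReePaper

open ReePaper

namespace ReePaper

lemma vec7_ext {X : Type*} {v w : Fin 7 → X} (h0 : v 0 = w 0) (h1 : v 1 = w 1) (h2 : v 2 = w 2)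
    (h3 : v 3 = w 3) (h4 : v 4 = w 4) (h5 : v 5 = w 5) (h6 : v 6 = w 6) : v = w := by
  ext j
  fin_cases j <;> assumption

section Matrices

variable {R : Type*} [CommRing R]

/-- `α(x)`, with `x ^ t` replaced by an independent variable `X`. -/
def alphaMat (X x : R) : Matrix (Fin 7) (Fin 7) R :=
  !![1, X, 0, 0, -(X ^ 3 * x), -(X ^ 3 * x ^ 2), X ^ 4 * x ^ 2;
     0, 1, x, X * x, -(X ^ 2 * x), 0, -(X ^ 3 * x ^ 2);
     0, 0, 1, X, -X ^ 2, 0, X ^ 3 * x;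
     0, 0, 0, 1, X, 0, 0;
     0, 0, 0, 0, 1, -x, X * x;
     0, 0, 0, 0, 0, 1, -X;
     0, 0, 0, 0, 0, 0, 1]

/-- `β(x)`, with `x ^ t` replaced by an independent variable `X`. -/
def betaMat (X x : R) : Matrix (Fin 7) (Fin 7) R :=
  !![1, 0, -X, 0, -x, 0, -(X * x);
     0, 1, 0, X, 0, -X ^ 2, 0;
     0, 0, 1, 0, 0, 0, x;
     0, 0, 0, 1, 0, X, 0;
     0, 0, 0, 0, 1, 0, X;
     0, 0, 0, 0, 0, 1, 0;
     0, 0, 0, 0, 0, 0, 1]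

/-- `γ(x)`, with `x ^ t` replaced by an independent variable `X`. -/
def gammaMat (X x : R) : Matrix (Fin 7) (Fin 7) R :=
  !![1, 0, 0, -X, 0, -x, -X ^ 2;
     0, 1, 0, 0, -X, 0, x;
     0, 0, 1, 0, 0, X, 0;
     0, 0, 0, 1, 0, 0, -X;
     0, 0, 0, 0, 1, 0, 0;
     0, 0, 0, 0, 0, 1, 0;
     0, 0, 0, 0, 0, 0, 1]

/-- `h(l)`, with `l ^ t` replaced by an independent variable `L`; this is the full
two-dimensional diagonal torus of `G₂`. -/
def torusMat {K : Type*} [Field K] (L l : K) : Matrix (Fin 7) (Fin 7) K :=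
  diagonal ![L, l / L, L ^ 2 / l, 1, l / L ^ 2, L / l, L⁻¹]

/-- The vector `oVec t a b c`, with the `t`-th powers of `a`, `b`, `c` replaced by independent
variables `A`, `B`, `C`. -/
def ovoidRow (A B C a b c : R) : Fin 7 → R :=
  ![1, A, -B, A * B - C, -b - A ^ 3 * a - A * C, -c - B * C - A ^ 3 * a ^ 2 - A * B ^ 2,
    A * c - b * B + A ^ 4 * a ^ 2 - C ^ 2 - A ^ 3 * a * B - A * B * C]

lemma vecMul_alphaMat (v : Fin 7 → R) (X x : R) :
    v ᵥ* alphaMat X x =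
      ![v 0, v 0 * X + v 1, v 1 * x + v 2, v 1 * X * x + v 2 * X + v 3,
        -(v 0 * X ^ 3 * x) - v 1 * X ^ 2 * x - v 2 * X ^ 2 + v 3 * X + v 4,
        -(v 0 * X ^ 3 * x ^ 2) - v 4 * x + v 5,
        v 0 * X ^ 4 * x ^ 2 - v 1 * X ^ 3 * x ^ 2 + v 2 * X ^ 3 * x + v 4 * X * x - v 5 * X
          + v 6] := by
  ext j
  fin_cases j <;> simp [alphaMat, vecMul, dotProduct, Fin.sum_univ_seven] <;> ring

lemma vecMul_betaMat (v : Fin 7 → R) (X x : R) :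
    v ᵥ* betaMat X x =
      ![v 0, v 1, -(v 0 * X) + v 2, v 1 * X + v 3, -(v 0 * x) + v 4,
        -(v 1 * X ^ 2) + v 3 * X + v 5, -(v 0 * X * x) + v 2 * x + v 4 * X + v 6] := by
  ext j
  fin_cases j <;> simp [betaMat, vecMul, dotProduct, Fin.sum_univ_seven, mul_assoc]

lemma vecMul_gammaMat (v : Fin 7 → R) (X x : R) :
    v ᵥ* gammaMat X x =
      ![v 0, v 1, v 2, -(v 0 * X) + v 3, -(v 1 * X) + v 4, -(v 0 * x) + v 2 * X + v 5,
        -(v 0 * X ^ 2) + v 1 * x - v 3 * X + v 6] := by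
  ext j
  fin_cases j <;> simp [gammaMat, vecMul, dotProduct, Fin.sum_univ_seven, sub_eq_add_neg]

lemma vecMul_torusMat {K : Type*} [Field K] (v : Fin 7 → K) (L l : K) :
    v ᵥ* torusMat L l =
      ![v 0 * L, v 1 * (l / L), v 2 * (L ^ 2 / l), v 3, v 4 * (l / L ^ 2), v 5 * (L / l),
        v 6 * L⁻¹] := by
  ext j
  fin_cases j <;> simp [torusMat, vecMul_diagonal]

lemma vecMul_ups {K : Type*} [Field K] (v : Fin 7 → K) :
    v ᵥ* ups = -(v ∘ Fin.rev) := by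
  apply vec7_ext <;> simp [ups, vecMul, dotProduct, Fin.sum_univ_seven]

lemma ovoidRow_vecMul_alphaMat [CharP R 3] (A B C a b c X x : R) :
    ovoidRow A B C a b c ᵥ* alphaMat X x =
      ovoidRow (A + X) (B - A * x) (C - A ^ 2 * x - B * X + A * x * X) (a + x) (b - a * X ^ 3)
        (c - a ^ 2 * X ^ 3 - b * x + a * x * X ^ 3) := by
  rw [vecMul_alphaMat]
  apply vec7_ext <;> simp only [ovoidRow, cons_val] <;> grind

lemma ovoidRow_vecMul_betaMat [CharP R 3] (A B C a b c X x : R) :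
    ovoidRow A B C a b c ᵥ* betaMat X x = ovoidRow A (B + X) C a (b + x) c := by
  rw [vecMul_betaMat]
  apply vec7_ext <;> simp only [ovoidRow, cons_val] <;> grind

lemma ovoidRow_vecMul_gammaMat [CharP R 3] (A B C a b c X x : R) :
    ovoidRow A B C a b c ᵥ* gammaMat X x = ovoidRow A B (C + X) a b (c + x) := by
  rw [vecMul_gammaMat]
  apply vec7_ext <;> simp only [ovoidRow, cons_val] <;> grind

end Matrices

section CrossProduct

variable {R : Type*} [CommRing R]

/-- The alternating product on `R ^ 7` induced by multiplication of trace-zero octonions, in a basis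
for which the generators of the Ree group respect it. Its automorphism group is `G₂`. -/
def crossMul (u v : Fin 7 → R) : Fin 7 → R :=
  ![(u 1 * v 2 - u 2 * v 1) - (u 0 * v 3 - u 3 * v 0),
    (u 0 * v 4 - u 4 * v 0) + (u 1 * v 3 - u 3 * v 1),
    (u 2 * v 3 - u 3 * v 2) - (u 0 * v 5 - u 5 * v 0),
    (u 2 * v 4 - u 4 * v 2) + (u 1 * v 5 - u 5 * v 1) - (u 0 * v 6 - u 6 * v 0),
    (u 3 * v 4 - u 4 * v 3) - (u 1 * v 6 - u 6 * v 1),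
    (u 2 * v 6 - u 6 * v 2) + (u 3 * v 5 - u 5 * v 3),
    (u 4 * v 5 - u 5 * v 4) - (u 3 * v 6 - u 6 * v 3)]

/-- `M`, acting on row vectors, respects `crossMul`; for invertible `M` this says `M ∈ G₂(R)`. -/
def PreservesCross (M : Matrix (Fin 7) (Fin 7) R) : Prop :=
  ∀ u v, crossMul (u ᵥ* M) (v ᵥ* M) = crossMul u v ᵥ* M

lemma preservesCross_one : PreservesCross (1 : Matrix (Fin 7) (Fin 7) R) := fun u v => by
  simp only [vecMul_one]

lemma PreservesCross.mul {M N : Matrix (Fin 7) (Fin 7) R} (hM : PreservesCross M)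
    (hN : PreservesCross N) : PreservesCross (M * N) := fun u v => by
  rw [← vecMul_vecMul, ← vecMul_vecMul, ← vecMul_vecMul, hN, hM]

lemma preservesCross_alphaMat [CharP R 3] (X x : R) : PreservesCross (alphaMat X x) := fun u v => by
  simp only [vecMul_alphaMat]
  apply vec7_ext <;> simp only [crossMul, cons_val] <;> grind

lemma preservesCross_betaMat [CharP R 3] (X x : R) : PreservesCross (betaMat X x) := fun u v => by
  simp only [vecMul_betaMat]
  apply vec7_ext <;> simp only [crossMul, cons_val] <;> grind

lemma preservesCross_gammaMat [CharP R 3] (X x : R) : PreservesCross (gammaMat X x) := fun u v => by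
  simp only [vecMul_gammaMat]
  apply vec7_ext <;> simp only [crossMul, cons_val] <;> grind

lemma preservesCross_torusMat {K : Type*} [Field K] {L l : K} (hL : L ≠ 0) (hl : l ≠ 0) :
    PreservesCross (torusMat L l) := fun u v => by
  simp only [vecMul_torusMat]
  apply vec7_ext <;> simp only [crossMul, cons_val] <;> field_simp

lemma preservesCross_ups {K : Type*} [Field K] :
    PreservesCross (ups : Matrix (Fin 7) (Fin 7) K) := fun u v => by
  simp only [vecMul_ups]
  apply vec7_ext <;> simp only [crossMul, cons_val, Pi.neg_apply, Function.comp_apply,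
    Fin.reduceRev] <;> ring

variable {M : Matrix (Fin 7) (Fin 7) R}

lemma PreservesCross.crossMul_row (hM : PreservesCross M) (i j : Fin 7) :
    crossMul (M i) (M j) = crossMul (Pi.single i 1) (Pi.single j 1) ᵥ* M := by
  rw [← hM, single_one_vecMul, single_one_vecMul]
  rfl

lemma PreservesCross.crossMul_row_of_eq_single (hM : PreservesCross M) {i j l : Fin 7} {c : R}
    (h : crossMul (Pi.single i 1) (Pi.single j 1) = Pi.single l c) :
    crossMul (M i) (M j) = c • M l := by
  rw [hM.crossMul_row, h, single_vecMul]
  rfl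

end CrossProduct

section Levi

variable {K : Type*} [Field K]

/-- The general element of the Levi subgroup `GL₂` of `G₂` fixing the two opposite points
`(1 : 0 : ⋯ : 0)` and `(0 : ⋯ : 0 : 1)`, parametrized by its `2 × 2` block in rows and columns
`1, 2`. -/
def leviMat (p q r s : K) : Matrix (Fin 7) (Fin 7) K :=
  !![p * s - q * r, 0, 0, 0, 0, 0, 0;
     0, p, q, 0, 0, 0, 0;
     0, r, s, 0, 0, 0, 0;
     0, 0, 0, 1, 0, 0, 0;
     0, 0, 0, 0, p / (p * s - q * r), -(q / (p * s - q * r)), 0;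
     0, 0, 0, 0, -(r / (p * s - q * r)), s / (p * s - q * r), 0;
     0, 0, 0, 0, 0, 0, (p * s - q * r)⁻¹]

lemma vecMul_leviMat (v : Fin 7 → K) (p q r s : K) :
    v ᵥ* leviMat p q r s =
      ![v 0 * (p * s - q * r), v 1 * p + v 2 * r, v 1 * q + v 2 * s, v 3,
        (v 4 * p - v 5 * r) / (p * s - q * r), (v 5 * s - v 4 * q) / (p * s - q * r),
        v 6 / (p * s - q * r)] := by
  apply vec7_ext <;> simp [leviMat, vecMul, dotProduct, Fin.sum_univ_seven] <;> ring

lemma leviMat_diagonal {L l : K} (hL : L ≠ 0) (hl : l ≠ 0) :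
    leviMat (l / L) 0 0 (L ^ 2 / l) = torusMat L l := by
  ext i j
  fin_cases i <;> fin_cases j <;> simp [leviMat, torusMat] <;> field_simp

lemma eq_vec_of_crossMul_eq [CharP K 3] {v : Fin 7 → K} {k : K} (hk : k ≠ 0)
    (h0 : crossMul (Pi.single 0 k) v = 0) (h3 : crossMul v (Pi.single 3 1) = v) :
    v = ![0, v 1, v 2, 0, 0, 0, 0] := by
  have h6 : v 6 = 0 := by simpa [crossMul, hk] using congrFun h0 3
  have h0 : -v 0 = v 0 := by simpa [crossMul] using congrFun h3 0
  have h4 : -v 4 = v 4 := by simpa [crossMul] using congrFun h3 4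
  have h5 : -v 5 = v 5 := by simpa [crossMul] using congrFun h3 5
  have h3 : 0 = v 3 := by simpa [crossMul] using congrFun h3 3
  apply vec7_ext <;> simp only [cons_val] <;> grind

variable {M : Matrix (Fin 7) (Fin 7) K}

lemma PreservesCross.row_three [CharP K 3] (hM : PreservesCross M) {k k' : K} (hk : k ≠ 0)
    (h0 : M 0 = Pi.single 0 k) (h6 : M 6 = Pi.single 6 k') :
    k * k' = 1 ∧ M 3 = Pi.single 3 1 := by
  have row3 : M 3 = Pi.single 3 (k * k') := by
    have h := hM.crossMul_row_of_eq_single (i := 0) (j := 6) (l := 3) (c := -1) (by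
      apply vec7_ext <;> simp [crossMul])
    rw [h0, h6, neg_one_smul] at h
    rw [← neg_eq_iff_eq_neg.2 h]
    apply vec7_ext <;> simp [crossMul]
  have hkk : k * k' = 1 := by
    have h := hM.crossMul_row_of_eq_single (i := 0) (j := 3) (l := 0) (c := -1) (by
      apply vec7_ext <;> simp [crossMul])
    rw [row3, h0] at h
    simpa [crossMul, hk] using congrFun h 0
  exact ⟨hkk, hkk ▸ row3⟩

/-- Rows `1` and `2` of `M`, like the corresponding basis vectors, are annihilated by row `0` and
fixed by multiplication by row `3`. -/
lemma PreservesCross.row_eq_of_row_three [CharP K 3] (hM : PreservesCross M) {k : K} (hk : k ≠ 0)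
    (h0 : M 0 = Pi.single 0 k) (h3 : M 3 = Pi.single 3 1) {i : Fin 7}
    (h0i : crossMul (Pi.single 0 1 : Fin 7 → K) (Pi.single i 1) = 0)
    (hi3 : crossMul (Pi.single i 1 : Fin 7 → K) (Pi.single 3 1) = Pi.single i 1) :
    M i = ![0, M i 1, M i 2, 0, 0, 0, 0] := by
  apply eq_vec_of_crossMul_eq hk
  · rw [← h0, hM.crossMul_row, h0i, zero_vecMul]
  · rw [← h3, hM.crossMul_row_of_eq_single hi3, one_smul]

lemma PreservesCross.eq_leviMat [CharP K 3] (hM : PreservesCross M) {k k' : K} (hk : k ≠ 0)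
    (h0 : M 0 = Pi.single 0 k) (h6 : M 6 = Pi.single 6 k') :
    ∃ p q r s, p * s - q * r = k ∧ M = leviMat p q r s := by
  obtain ⟨hkk, h3⟩ := hM.row_three hk h0 h6
  have h1 := hM.row_eq_of_row_three hk h0 h3 (i := 1) (by apply vec7_ext <;> simp [crossMul])
    (by apply vec7_ext <;> simp [crossMul])
  have h2 := hM.row_eq_of_row_three hk h0 h3 (i := 2) (by apply vec7_ext <;> simp [crossMul])
    (by apply vec7_ext <;> simp [crossMul])
  generalize M 1 1 = p, M 1 2 = q, M 2 1 = r, M 2 2 = s at h1 h2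
  have hdet : p * s - q * r = k := by
    have h := hM.crossMul_row_of_eq_single (i := 1) (j := 2) (l := 0) (c := 1) (by
      apply vec7_ext <;> simp [crossMul])
    rw [h1, h2, h0] at h
    simpa [crossMul] using congrFun h 0
  obtain rfl : k' = k⁻¹ := eq_inv_of_mul_eq_one_right hkk
  have h4 : M 4 = ![0, 0, 0, 0, p / k, -(q / k), 0] := by
    have h := hM.crossMul_row_of_eq_single (i := 1) (j := 6) (l := 4) (c := -1) (by
      apply vec7_ext <;> simp [crossMul])
    rw [h1, h6, neg_one_smul] at h
    rw [← neg_eq_iff_eq_neg.2 h]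
    apply vec7_ext <;> simp [crossMul, div_eq_mul_inv]
  have h5 : M 5 = ![0, 0, 0, 0, -(r / k), s / k, 0] := by
    have h := hM.crossMul_row_of_eq_single (i := 2) (j := 6) (l := 5) (c := 1) (by
      apply vec7_ext <;> simp [crossMul])
    rw [h2, h6, one_smul] at h
    rw [← h]
    apply vec7_ext <;> simp [crossMul, div_eq_mul_inv]
  subst hdet
  refine ⟨p, q, r, s, rfl, vec7_ext ?_ h1 h2 ?_ h4 h5 ?_⟩
  · rw [h0]; apply vec7_ext <;> simp [leviMat]
  · rw [h3]; apply vec7_ext <;> simp [leviMat]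
  · rw [h6]; apply vec7_ext <;> simp [leviMat]

end Levi

section OvoidEquations

variable {R : Type*} [CommRing R]

lemma map_comp_ovoidRow {S E : Type*} [CommRing S] [FunLike E R S] [RingHomClass E R S] (f : E)
    (A B C a b c : R) :
    f ∘ ovoidRow A B C a b c = ovoidRow (f A) (f B) (f C) (f a) (f b) (f c) := by
  apply vec7_ext <;> simp [ovoidRow]

/-- Homogeneous equations for the Ree–Tits ovoid in a vector `v` and its image `w` under the inverse
of the Tits automorphism. The quadric is the one preserved by `G₂`. On the chart `v 0 = w 0 = 1` the
first three equations express `v 6`, `v 4` and `v 5` by the remaining coordinates; the last one is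
used only on the hyperplane `v 0 = 0`. -/
structure OvoidEqns (v w : Fin 7 → R) : Prop where
  quadric : v 3 ^ 2 + v 2 * v 4 + v 1 * v 5 + v 0 * v 6 = 0
  coord_four : v 0 ^ 3 * w 2 - v 0 ^ 2 * v 4 * w 0 + v 0 * v 1 * v 3 * w 0 - v 1 ^ 3 * w 1
    + v 1 ^ 2 * v 2 * w 0 = 0
  coord_five : v 0 ^ 3 * w 3 + v 0 ^ 2 * v 4 * w 1 - v 0 ^ 2 * v 5 * w 0 - v 0 * v 1 * v 3 * w 1
    - v 0 * v 2 * v 3 * w 0 - v 1 ^ 2 * v 2 * w 1 + v 1 * v 2 ^ 2 * w 0 = 0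
  hyperplane : -(v 0 ^ 2 * v 4 * w 4) + v 0 * v 1 * v 3 * w 4 + v 0 * v 4 * v 5 * w 1
    + v 1 ^ 2 * v 2 * w 4 + v 1 * v 2 * v 6 * w 1 - v 1 * v 3 * v 5 * w 1 + v 2 ^ 3 * w 2
    + v 2 * v 3 * v 4 * w 1 = 0

lemma ovoidEqns_ovoidRow [CharP R 3] (A B C a b c : R) :
    OvoidEqns (ovoidRow A B C a b c) (ovoidRow a b c (A ^ 3) (B ^ 3) (C ^ 3)) := by
  constructor <;> simp only [ovoidRow, cons_val] <;> grind

lemma ovoidEqns_ovoidRow_rev [CharP R 3] (A B C a b c : R) :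
    OvoidEqns (ovoidRow A B C a b c ∘ Fin.rev)
      (ovoidRow a b c (A ^ 3) (B ^ 3) (C ^ 3) ∘ Fin.rev) := by
  constructor <;> simp only [ovoidRow, Function.comp_apply, Fin.reduceRev, cons_val] <;> grind

lemma OvoidEqns.smul {v w : Fin 7 → R} (h : OvoidEqns v w) (k l : R) :
    OvoidEqns (k • v) (l • w) where
  quadric := by
    simp only [Pi.smul_apply, smul_eq_mul]
    linear_combination k ^ 2 * h.quadric
  coord_four := by
    simp only [Pi.smul_apply, smul_eq_mul]
    linear_combination k ^ 3 * l * h.coord_four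
  coord_five := by
    simp only [Pi.smul_apply, smul_eq_mul]
    linear_combination k ^ 3 * l * h.coord_five
  hyperplane := by
    simp only [Pi.smul_apply, smul_eq_mul]
    linear_combination k ^ 3 * l * h.hyperplane

lemma OvoidEqns.eq_ovoidRow [CharP R 3] {v w : Fin 7 → R} (h : OvoidEqns v w) (hv : v 0 = 1)
    (hw : w 0 = 1) :
    v = ovoidRow (v 1) (-v 2) (-(v 1 * v 2) - v 3) (w 1) (-w 2) (-(w 1 * w 2) - w 3) := by
  obtain ⟨h6, h4, h5, -⟩ := h
  rw [hv, hw] at h4 h5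
  rw [hv] at h6
  apply vec7_ext <;> simp only [ovoidRow, cons_val] <;> grind

end OvoidEquations

section OnOvoid

variable {K : Type*} [Field K]

/-- `v` represents a point of the Ree–Tits ovoid attached to the Tits automorphism `θ`. The
equations are imposed on the reversed vector too, which makes the symmetry under `ups` evident. -/
def OnOvoid (θ : K ≃+* K) (v : Fin 7 → K) : Prop :=
  OvoidEqns v (θ.symm ∘ v) ∧ OvoidEqns (v ∘ Fin.rev) (θ.symm ∘ v ∘ Fin.rev)

variable {θ : K ≃+* K} {v : Fin 7 → K}

lemma OnOvoid.smul (h : OnOvoid θ v) (k : K) : OnOvoid θ (k • v) := by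
  have hk (u : Fin 7 → K) : θ.symm ∘ (k • u) = θ.symm k • (θ.symm ∘ u) := by
    ext i
    simp
  refine ⟨hk v ▸ h.1.smul _ _, ?_⟩
  change OvoidEqns (k • (v ∘ Fin.rev)) (θ.symm ∘ (k • (v ∘ Fin.rev)))
  exact hk (v ∘ Fin.rev) ▸ h.2.smul _ _

lemma OnOvoid.comp_rev (h : OnOvoid θ v) : OnOvoid θ (v ∘ Fin.rev) := by
  refine ⟨h.2, ?_⟩
  simpa only [Function.comp_assoc, Fin.rev_involutive.comp_self, Function.comp_id] using h.1

lemma OnOvoid.eq_single_of_zero_eq_zero (h : OnOvoid θ v) (h0 : v 0 = 0) :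
    v = Pi.single 6 (v 6) := by
  obtain ⟨⟨quad, four, -, hyper⟩, -, four', -, hyper'⟩ := h
  have h1 : v 1 = 0 := by simpa [h0] using four
  have h2 : v 2 = 0 := by simpa [h0, h1] using hyper
  have h3 : v 3 = 0 := by simpa [h0, h1, h2] using quad
  have h4 : v 4 = 0 := by simpa [h0, h1, h2, h3] using hyper'
  have h5 : v 5 = 0 := by simpa [h0, h1, h2, h3, h4] using four'
  apply vec7_ext <;> simp [h0, h1, h2, h3, h4, h5]

lemma onOvoid_single_six (k : K) : OnOvoid θ (Pi.single 6 k) := by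
  constructor <;> constructor <;> simp

end OnOvoid

section TitsAutomorphism

variable {K : Type*} [Field K]

/-- `θ` is the power map `x ↦ x ^ t` and a Tits automorphism, meaning that `θ ∘ θ` is inverse to the
cubing map. -/
structure IsTitsAut (t : ℕ) (θ : K ≃+* K) : Prop where
  apply_eq_pow (x : K) : θ x = x ^ t
  apply_apply_pow_three (x : K) : θ (θ x) ^ 3 = x

namespace IsTitsAut

variable {t : ℕ} {θ : K ≃+* K} (hθ : IsTitsAut t θ)

include hθ

lemma symm_apply (x : K) : θ.symm x = θ x ^ 3 := by
  rw [RingEquiv.symm_apply_eq, map_pow, hθ.apply_apply_pow_three]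

lemma amat_eq (x : K) : amat t x = alphaMat (θ x) x := by
  simp only [amat, alphaMat, hθ.apply_eq_pow]
  ring_nf

lemma bmat_eq (x : K) : bmat t x = betaMat (θ x) x := by
  simp only [bmat, betaMat, hθ.apply_eq_pow]
  ring_nf

lemma cmat_eq (x : K) : cmat t x = gammaMat (θ x) x := by
  simp only [cmat, gammaMat, hθ.apply_eq_pow]
  ring_nf

lemma hmat_eq (l : Kˣ) : hmat t l = torusMat (θ l) (l : K) := by
  have hl : (l : K) ≠ 0 := l.ne_zero
  rw [hmat, torusMat, hθ.apply_eq_pow]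
  congr 1
  apply vec7_ext <;> simp [zpow_sub₀ hl, zpow_add₀ hl, two_mul, sq]

lemma oVec_eq (a b c : K) : oVec t a b c = ovoidRow (θ a) (θ b) (θ c) a b c := by
  simp only [oVec, ovoidRow, hθ.apply_eq_pow]
  ring_nf

lemma onOvoid_oVec [CharP K 3] (a b c : K) : OnOvoid θ (oVec t a b c) := by
  have h : θ.symm ∘ oVec t a b c = ovoidRow a b c (θ a ^ 3) (θ b ^ 3) (θ c ^ 3) := by
    rw [hθ.oVec_eq, map_comp_ovoidRow]
    simp only [hθ.symm_apply, hθ.apply_apply_pow_three]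
  refine ⟨?_, ?_⟩
  · rw [h, hθ.oVec_eq]
    exact ovoidEqns_ovoidRow ..
  · rw [← Function.comp_assoc, h, hθ.oVec_eq]
    exact ovoidEqns_ovoidRow_rev ..

lemma eq_oVec_of_onOvoid [CharP K 3] {v : Fin 7 → K} (h : OnOvoid θ v) (h0 : v 0 = 1) :
    ∃ a b c, v = oVec t a b c := by
  refine ⟨θ.symm (v 1), -θ.symm (v 2), -(θ.symm (v 1) * θ.symm (v 2)) - θ.symm (v 3), ?_⟩
  rw [hθ.oVec_eq]
  simpa [h0] using h.1.eq_ovoidRow h0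

end IsTitsAut

end TitsAutomorphism

section Coefficients

variable {K : Type*} [Field K]

/-- The even part of `h` isolates `c₃`; the second difference of the odd part then gives
`c₄ * (a - σ a) = 0`. -/
lemma eq_zero_of_forall_add_mul_map_eq_zero [CharP K 3] {σ : K →+* K} (hσ : σ ≠ RingHom.id K)
    {c₁ c₂ c₃ c₄ : K}
    (h : ∀ a, c₁ * a + c₂ * σ a + c₃ * (a * σ a) + c₄ * (a ^ 2 * σ a) = 0) :
    c₁ = 0 ∧ c₃ = 0 ∧ c₄ = 0 := by
  obtain ⟨a, ha⟩ : ∃ a, a - σ a ≠ 0 := by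
    contrapose! hσ
    exact RingHom.ext fun a => (sub_eq_zero.1 (hσ a)).symm
  have h3 : c₃ = 0 := by
    have h₁ := h 1
    have h₂ := h (-1)
    simp only [map_neg, map_one] at h₁ h₂
    grind
  simp only [h3, zero_mul, add_zero] at h
  have h1 := h 1
  have h4 : c₄ = 0 := by
    have hp := h (a + 1)
    have hm := h (a - 1)
    simp only [map_add, map_sub, map_one] at h1 hp hm
    have : c₄ * (a - σ a) = 0 := by grind
    exact (mul_eq_zero.1 this).resolve_right ha
  simp only [h4, zero_mul, add_zero] at h h1
  have h1 : c₁ * (a - σ a) = 0 := by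
    simp only [map_one] at h1
    linear_combination h a - σ a * h1
  exact ⟨(mul_eq_zero.1 h1).resolve_right ha, h3, h4⟩

end Coefficients

section TorusStabilizer

variable {K : Type*} [Field K]

namespace IsTitsAut

variable {t : ℕ} {θ : K ≃+* K} (hθ : IsTitsAut t θ)

include hθ

lemma leviMat_coeffs [CharP K 3] (hne : θ ≠ RingEquiv.refl K) {p q r s : K}
    (hk : p * s - q * r ≠ 0) (hO : ∀ a, OnOvoid θ (oVec t a 0 0 ᵥ* leviMat p q r s)) :
    q = 0 ∧ r = 0 ∧ s * θ.symm s = p := by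
  have hne' : (θ.symm : K →+* K) ≠ RingHom.id K := fun h => hne <| RingEquiv.ext fun x => by
    simpa using (congrArg θ (RingHom.congr_fun h x)).symm
  have key (a : K) : (p * s - q * r) ^ 3 * θ.symm q * a
      + p ^ 2 * q * θ.symm (p * s - q * r) * θ.symm a
      + ((p * s - q * r) * p * θ.symm (p * s - q * r) - p ^ 3 * θ.symm p) * (a * θ.symm a)
      + -((p * s - q * r) * r * θ.symm (p * s - q * r)) * (a ^ 2 * θ.symm a) = 0 := by
    have h := (hO a).1.coord_four
    simp only [hθ.oVec_eq, vecMul_leviMat, ovoidRow, Function.comp_apply, cons_val, map_add,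
      map_mul, map_zero, map_neg, RingEquiv.symm_apply_apply, one_mul] at h
    generalize p * s - q * r = k at hk h ⊢
    rw [hθ.symm_apply a]
    field_simp at h
    linear_combination h
  obtain ⟨hq, hp, hr⟩ := eq_zero_of_forall_add_mul_map_eq_zero hne' key
  have hk' : θ.symm (p * s - q * r) ≠ 0 := (map_ne_zero _).2 hk
  obtain rfl : q = 0 := by simpa [hk] using hq
  obtain rfl : r = 0 := by
    simpa only [neg_eq_zero, mul_eq_zero, hk, hk', false_or, or_false] using hr
  simp only [mul_zero, sub_zero, map_mul] at hk hk' hp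
  refine ⟨rfl, rfl, ?_⟩
  apply mul_left_cancel₀
    (mul_ne_zero (pow_ne_zero 2 (left_ne_zero_of_mul hk)) (left_ne_zero_of_mul hk'))
  linear_combination hp

lemma eq_torusMat_of_onOvoid [CharP K 3] (hne : θ ≠ RingEquiv.refl K) {p q r s : K}
    (hk : p * s - q * r ≠ 0) (hO : ∀ a b c, OnOvoid θ (oVec t a b c ᵥ* leviMat p q r s)) :
    ∃ l, l ≠ 0 ∧ leviMat p q r s = torusMat (θ l) l := by
  obtain ⟨rfl, rfl, hs⟩ := hθ.leviMat_coeffs hne hk fun a => hO a 0 0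
  rw [mul_zero, sub_zero] at hk
  obtain ⟨hp0, hs0⟩ := mul_ne_zero_iff.1 hk
  have hp : θ.symm p = p * s ^ 2 := by
    have h : -((p * s) ^ 3 * θ.symm s)
        - (p * s) ^ 2 * (-p / (p * s)) * (θ.symm p * θ.symm s) = 0 := by
      simpa [hθ.oVec_eq, vecMul_leviMat, ovoidRow] using (hO 0 1 0).1.coord_four
    have hσs : θ.symm s ≠ 0 := by simpa using hs0
    apply mul_left_cancel₀ (mul_ne_zero (mul_ne_zero (pow_ne_zero 2 hp0) hs0) hσs)
    field_simp at h
    linear_combination h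
  have hl : θ (p ^ 2 * s) = p * s := by
    rw [← RingEquiv.eq_symm_apply, map_mul, hp]
    linear_combination -p * s * hs
  refine ⟨p ^ 2 * s, mul_ne_zero (pow_ne_zero 2 hp0) hs0, ?_⟩
  rw [hl, ← leviMat_diagonal hk (mul_ne_zero (pow_ne_zero 2 hp0) hs0)]
  congr 1 <;> field_simp

lemma not_isSquare_neg_one [CharP K 3] : ¬IsSquare (-1 : K) := by
  rintro ⟨i, hi⟩
  have hθi : θ i = i ∨ θ i = -i := by
    rw [← sq_eq_sq_iff_eq_or_eq_neg, ← map_pow, sq, ← hi, map_neg, map_one]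
  have hθθi : θ (θ i) = i := by rcases hθi with h | h <;> simp [h]
  have hi3 := hθ.apply_apply_pow_three i
  rw [hθθi] at hi3
  obtain rfl : i = 0 := by grind
  simp at hi

lemma ne_refl [Fintype K] (hK : 3 < Fintype.card K) : θ ≠ RingEquiv.refl K := by
  rintro rfl
  have h (u : Kˣ) : u ^ 2 = 1 := by
    ext
    have := hθ.apply_apply_pow_three u
    apply mul_left_cancel₀ u.ne_zero
    simpa [pow_succ', mul_assoc] using this
  have := Nat.le_of_dvd two_pos ((FiniteField.forall_pow_eq_one_iff K 2).1 h)
  omega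

end IsTitsAut

lemma exists_sq_eq_or_eq_neg_of_not_isSquare_neg_one [Finite K] (h : ¬IsSquare (-1 : K)) (l : Kˣ) :
    ∃ u : Kˣ, l = u ^ 2 ∨ l = -u ^ 2 := by
  classical
  cases nonempty_fintype K
  suffices IsSquare (l : K) ∨ IsSquare (-l : K) by
    rcases this with ⟨r, hr⟩ | ⟨r, hr⟩
    · have hr0 : r ≠ 0 := by rintro rfl; simp at hr
      exact ⟨Units.mk0 r hr0, .inl <| Units.ext <| by simp [hr, sq]⟩
    · have hr0 : r ≠ 0 := by rintro rfl; simp at hr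
      exact ⟨Units.mk0 r hr0, .inr <| Units.ext <| by simp [← hr, sq]⟩
  by_contra! hl
  have h₁ := quadraticChar_neg_one_iff_not_isSquare.2 h
  have h₂ := quadraticChar_neg_one_iff_not_isSquare.2 hl.1
  have h₃ := quadraticChar_neg_one_iff_not_isSquare.2 hl.2
  rw [neg_eq_neg_one_mul, map_mul, h₁, h₂] at h₃
  norm_num at h₃

end TorusStabilizer

section Generators

variable {K : Type*} [Field K]

lemma det_amat (t : ℕ) (x : K) : (amat t x).det = 1 := by
  rw [det_of_isUpperTriangular]
  · simp [Fin.prod_univ_seven, amat]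
  · simp [IsUpperTriangular, BlockTriangular, Fin.forall_fin_succ, amat]

lemma det_bmat (t : ℕ) (x : K) : (bmat t x).det = 1 := by
  rw [det_of_isUpperTriangular]
  · simp [Fin.prod_univ_seven, bmat]
  · simp [IsUpperTriangular, BlockTriangular, Fin.forall_fin_succ, bmat]

lemma det_cmat (t : ℕ) (x : K) : (cmat t x).det = 1 := by
  rw [det_of_isUpperTriangular]
  · simp [Fin.prod_univ_seven, cmat]
  · simp [IsUpperTriangular, BlockTriangular, Fin.forall_fin_succ, cmat]

lemma hmat_one (t : ℕ) : hmat t (1 : Kˣ) = 1 := by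
  rw [hmat, ← diagonal_one]
  congr 1
  apply vec7_ext <;> simp

lemma hmat_mul (t : ℕ) (l l' : Kˣ) : hmat t (l * l') = hmat t l * hmat t l' := by
  rw [hmat, hmat, hmat, diagonal_mul_diagonal]
  congr 1
  apply vec7_ext <;> simp [mul_pow, mul_zpow, mul_comm]

lemma ups_mul_ups : (ups * ups : Matrix (Fin 7) (Fin 7) K) = 1 := by
  refine ext_iff_vecMul.2 fun v => ?_
  rw [← vecMul_vecMul, vecMul_ups, vecMul_ups, vecMul_one]
  ext i
  simp

lemma ups_mul_hmat (t : ℕ) (l : Kˣ) : ups * hmat t l = hmat t l⁻¹ * ups := by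
  refine ext_iff_vecMul.2 fun v => ?_
  rw [← vecMul_vecMul, ← vecMul_vecMul, vecMul_ups, vecMul_ups]
  apply vec7_ext <;> simp [hmat, vecMul_diagonal, _root_.zpow_sub, mul_comm]

/-- The `7`-dimensional matrix representation of the Ree group. -/
def natRep (t : ℕ) : ReeGroup (F := K) t →* Matrix (Fin 7) (Fin 7) K :=
  (Units.coeHom _).comp (Subgroup.subtype _)

lemma natRep_injective (t : ℕ) : Function.Injective (natRep (K := K) t) :=
  Units.val_injective.comp Subtype.val_injective

/-- `α(x)` as an element of the Ree group. -/
def alphaElt (t : ℕ) (x : K) : ReeGroup (F := K) t :=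
  ⟨GeneralLinearGroup.mkOfDetNeZero (amat t x) (by simp [det_amat]),
    Subgroup.subset_closure <| .inl ⟨x, rfl⟩⟩

/-- `β(x)` as an element of the Ree group. -/
def betaElt (t : ℕ) (x : K) : ReeGroup (F := K) t :=
  ⟨GeneralLinearGroup.mkOfDetNeZero (bmat t x) (by simp [det_bmat]),
    Subgroup.subset_closure <| .inr <| .inl ⟨x, rfl⟩⟩

/-- `γ(x)` as an element of the Ree group. -/
def gammaElt (t : ℕ) (x : K) : ReeGroup (F := K) t :=
  ⟨GeneralLinearGroup.mkOfDetNeZero (cmat t x) (by simp [det_cmat]),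
    Subgroup.subset_closure <| .inr <| .inr <| .inl ⟨x, rfl⟩⟩

/-- `l ↦ h(l)` as a homomorphism into the Ree group. -/
def torusHom (t : ℕ) : Kˣ →* ReeGroup (F := K) t :=
  (MonoidHom.toHomUnits ⟨⟨hmat t, hmat_one t⟩, hmat_mul t⟩).codRestrict _ fun l =>
    Subgroup.subset_closure <| .inr <| .inr <| .inr <| .inl ⟨l, rfl⟩

/-- `Υ` as an element of the Ree group. -/
def upsElt (t : ℕ) : ReeGroup (F := K) t :=
  ⟨⟨ups, ups, ups_mul_ups, ups_mul_ups⟩,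
    Subgroup.subset_closure <| .inr <| .inr <| .inr <| .inr rfl⟩

lemma upsElt_mul_upsElt (t : ℕ) : upsElt t * upsElt t = (1 : ReeGroup (F := K) t) :=
  natRep_injective t ups_mul_ups

lemma upsElt_mul_torusHom (t : ℕ) (l : Kˣ) :
    upsElt t * torusHom t l = torusHom t l⁻¹ * upsElt t :=
  natRep_injective t (ups_mul_hmat t l)

lemma isConj_torusHom_mul_upsElt (t : ℕ) (e u : Kˣ) :
    IsConj (torusHom t e * upsElt t) (torusHom t (e * u ^ 2) * upsElt t) := by
  refine isConj_iff.2 ⟨torusHom t u, ?_⟩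
  rw [← map_inv, mul_assoc, mul_assoc, upsElt_mul_torusHom, inv_inv, ← mul_assoc, ← mul_assoc,
    ← map_mul, ← map_mul]
  congr 2
  rw [sq, mul_comm u e, mul_assoc]

lemma natRep_upsElt (t : ℕ) : natRep t (upsElt t) = (ups : Matrix (Fin 7) (Fin 7) K) := rfl

variable {t : ℕ} {θ : K ≃+* K} (hθ : IsTitsAut t θ)

include hθ

lemma IsTitsAut.natRep_alphaElt (x : K) : natRep t (alphaElt t x) = alphaMat (θ x) x :=
  hθ.amat_eq x

lemma IsTitsAut.natRep_betaElt (x : K) : natRep t (betaElt t x) = betaMat (θ x) x :=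
  hθ.bmat_eq x

lemma IsTitsAut.natRep_gammaElt (x : K) : natRep t (gammaElt t x) = gammaMat (θ x) x :=
  hθ.cmat_eq x

lemma IsTitsAut.natRep_torusHom (l : Kˣ) : natRep t (torusHom t l) = torusMat (θ l) (l : K) :=
  hθ.hmat_eq l

lemma IsTitsAut.isConj_torusHom_neg_one_upsElt [CharP K 3] :
    IsConj (torusHom t (-1) : ReeGroup (F := K) t) (upsElt t) := by
  -- The conjugating word lies in `Ree(3)`, so this is an identity of matrices over `𝔽₃`.
  refine isConj_iff.2 ⟨(alphaElt t 1 * upsElt t * betaElt t 1 * upsElt t * gammaElt t 1)⁻¹, ?_⟩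
  rw [inv_inv, mul_assoc, inv_mul_eq_iff_eq_mul]
  refine natRep_injective t <| ext_iff_vecMul.2 fun v => ?_
  simp only [map_mul, ← vecMul_vecMul, hθ.natRep_torusHom, hθ.natRep_alphaElt, hθ.natRep_betaElt,
    hθ.natRep_gammaElt, natRep_upsElt, map_one, map_neg, Units.val_neg, Units.val_one,
    vecMul_torusMat, vecMul_alphaMat, vecMul_betaMat, vecMul_gammaMat, vecMul_ups]
  apply vec7_ext <;> simp only [Pi.neg_apply, Function.comp_apply, Fin.reduceRev, cons_val] <;>
    grind

lemma IsTitsAut.isConj_torusHom_neg_one_mul_upsElt [CharP K 3] :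
    IsConj (torusHom t (-1) : ReeGroup (F := K) t) (torusHom t (-1) * upsElt t) := by
  refine isConj_iff.2 ⟨(gammaElt t 1 * upsElt t * betaElt t 1 * upsElt t * alphaElt t 1)⁻¹, ?_⟩
  rw [inv_inv, mul_assoc, inv_mul_eq_iff_eq_mul]
  refine natRep_injective t <| ext_iff_vecMul.2 fun v => ?_
  simp only [map_mul, ← vecMul_vecMul, hθ.natRep_torusHom, hθ.natRep_alphaElt, hθ.natRep_betaElt,
    hθ.natRep_gammaElt, natRep_upsElt, map_one, map_neg, Units.val_neg, Units.val_one,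
    vecMul_torusMat, vecMul_alphaMat, vecMul_betaMat, vecMul_gammaMat, vecMul_ups]
  apply vec7_ext <;> simp only [Pi.neg_apply, Function.comp_apply, Fin.reduceRev, cons_val] <;>
    grind

lemma IsTitsAut.isConj_torusHom_neg_one_torusHom_mul_upsElt [Finite K] [CharP K 3] (l : Kˣ) :
    IsConj (torusHom t (-1)) (torusHom t l * upsElt t) := by
  obtain ⟨u, rfl | rfl⟩ :=
    exists_sq_eq_or_eq_neg_of_not_isSquare_neg_one hθ.not_isSquare_neg_one l
  · simpa using hθ.isConj_torusHom_neg_one_upsElt.trans <| by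
      simpa using isConj_torusHom_mul_upsElt t 1 u
  · simpa using hθ.isConj_torusHom_neg_one_mul_upsElt.trans <| isConj_torusHom_mul_upsElt t (-1) u

end Generators

section Preservation

variable {K : Type*} [Field K] {t : ℕ} {θ : K ≃+* K} (hθ : IsTitsAut t θ)

include hθ

lemma IsTitsAut.reeGroup_induction [Finite K] {p : Matrix (Fin 7) (Fin 7) K → Prop} (one : p 1)
    (mul : ∀ M N, p M → p N → p (M * N)) (alpha : ∀ x, p (alphaMat (θ x) x))
    (beta : ∀ x, p (betaMat (θ x) x)) (gamma : ∀ x, p (gammaMat (θ x) x))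
    (torus : ∀ l ≠ 0, p (torusMat (θ l) l)) (ups : p ups) (g : ReeGroup (F := K) t) :
    p (natRep t g) := by
  obtain ⟨g, hg⟩ := g
  change p (g : Matrix (Fin 7) (Fin 7) K)
  rw [ReeGroup, ← Subgroup.mem_toSubmonoid, Subgroup.closure_toSubmonoid_of_finite] at hg
  induction hg using Submonoid.closure_induction with
  | mem g hg =>
    obtain ⟨x, h⟩ | ⟨x, h⟩ | ⟨x, h⟩ | ⟨l, h⟩ | h := hg <;> rw [h]
    · exact hθ.amat_eq x ▸ alpha x
    · exact hθ.bmat_eq x ▸ beta x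
    · exact hθ.cmat_eq x ▸ gamma x
    · exact hθ.hmat_eq l ▸ torus l l.ne_zero
    · exact ups
  | one => exact one
  | mul _ _ _ _ hg hh => exact mul _ _ hg hh

lemma IsTitsAut.preservesCross [Finite K] [CharP K 3] (g : ReeGroup (F := K) t) :
    PreservesCross (natRep t g) :=
  hθ.reeGroup_induction preservesCross_one (fun _ _ => .mul) (fun _ => preservesCross_alphaMat _ _)
    (fun _ => preservesCross_betaMat _ _) (fun _ => preservesCross_gammaMat _ _)
    (fun _ hl => preservesCross_torusMat ((map_ne_zero θ).2 hl) hl) preservesCross_ups g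

lemma IsTitsAut.onOvoid_iff [CharP K 3] {v : Fin 7 → K} :
    OnOvoid θ v ↔ (∃ k : K, v = Pi.single 6 k) ∨ ∃ k a b c : K, v = k • oVec t a b c := by
  constructor
  · intro h
    by_cases h0 : v 0 = 0
    · exact .inl ⟨_, h.eq_single_of_zero_eq_zero h0⟩
    · obtain ⟨a, b, c, habc⟩ := hθ.eq_oVec_of_onOvoid (h.smul (v 0)⁻¹)
        (by rw [Pi.smul_apply, smul_eq_mul, inv_mul_cancel₀ h0])
      exact .inr ⟨v 0, a, b, c, (inv_smul_eq_iff₀ h0).1 habc⟩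
  · rintro (⟨k, rfl⟩ | ⟨k, a, b, c, rfl⟩)
    · exact onOvoid_single_six k
    · exact (hθ.onOvoid_oVec a b c).smul k

lemma IsTitsAut.oVec_vecMul_alphaMat [CharP K 3] (a b c x : K) :
    oVec t a b c ᵥ* alphaMat (θ x) x =
      oVec t (a + x) (b - a * θ x ^ 3) (c - a ^ 2 * θ x ^ 3 - b * x + a * x * θ x ^ 3) := by
  simp only [hθ.oVec_eq, ovoidRow_vecMul_alphaMat, map_add, map_sub, map_mul, map_pow,
    hθ.apply_apply_pow_three, mul_right_comm (θ a) (θ x) x]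

lemma IsTitsAut.oVec_vecMul_betaMat [CharP K 3] (a b c x : K) :
    oVec t a b c ᵥ* betaMat (θ x) x = oVec t a (b + x) c := by
  simp only [hθ.oVec_eq, ovoidRow_vecMul_betaMat, map_add]

lemma IsTitsAut.oVec_vecMul_gammaMat [CharP K 3] (a b c x : K) :
    oVec t a b c ᵥ* gammaMat (θ x) x = oVec t a b (c + x) := by
  simp only [hθ.oVec_eq, ovoidRow_vecMul_gammaMat, map_add]

lemma IsTitsAut.oVec_vecMul_torusMat (a b c : K) {l : K} (hl : l ≠ 0) :
    oVec t a b c ᵥ* torusMat (θ l) l =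
      θ l • oVec t (a * (θ l ^ 3 / l ^ 2)) (b * (l / θ l ^ 3)) (c / l) := by
  have hθl : θ l ≠ 0 := (map_ne_zero θ).2 hl
  simp only [hθ.oVec_eq, vecMul_torusMat, map_mul, map_div₀, map_pow, hθ.apply_apply_pow_three]
  apply vec7_ext <;> simp only [ovoidRow, Pi.smul_apply, smul_eq_mul, cons_val] <;> field_simp

lemma IsTitsAut.onOvoid_vecMul_of_row_six [CharP K 3] {M : Matrix (Fin 7) (Fin 7) K}
    (h6 : OnOvoid θ (M 6)) (hO : ∀ a b c, OnOvoid θ (oVec t a b c ᵥ* M)) {v : Fin 7 → K}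
    (hv : OnOvoid θ v) : OnOvoid θ (v ᵥ* M) := by
  obtain ⟨k, rfl⟩ | ⟨k, a, b, c, rfl⟩ := hθ.onOvoid_iff.1 hv
  · rw [single_vecMul]
    exact h6.smul k
  · rw [smul_vecMul]
    exact (hO a b c).smul k

lemma IsTitsAut.onOvoid_vecMul [Finite K] [CharP K 3] (g : ReeGroup (F := K) t) {v : Fin 7 → K}
    (hv : OnOvoid θ v) : OnOvoid θ (v ᵥ* natRep t g) := by
  have h6 {M : Matrix (Fin 7) (Fin 7) K} {k : K} (h : M 6 = ![0, 0, 0, 0, 0, 0, k]) :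
      OnOvoid θ (M 6) := by
    convert onOvoid_single_six k
    rw [h]
    apply vec7_ext <;> simp
  refine hθ.reeGroup_induction (p := fun M => ∀ v, OnOvoid θ v → OnOvoid θ (v ᵥ* M))
    (fun v hv => by rwa [vecMul_one]) (fun M N hM hN v hv => vecMul_vecMul v M N ▸ hN _ (hM v hv))
    (fun x v => hθ.onOvoid_vecMul_of_row_six (h6 rfl) fun a b c => ?_)
    (fun x v => hθ.onOvoid_vecMul_of_row_six (h6 rfl) fun a b c => ?_)
    (fun x v => hθ.onOvoid_vecMul_of_row_six (h6 rfl) fun a b c => ?_)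
    (fun l hl v => hθ.onOvoid_vecMul_of_row_six (h6 (k := (θ l)⁻¹) ?_) fun a b c => ?_)
    (fun v hv => ?_) g v hv
  · exact hθ.oVec_vecMul_alphaMat a b c x ▸ hθ.onOvoid_oVec ..
  · exact hθ.oVec_vecMul_betaMat a b c x ▸ hθ.onOvoid_oVec ..
  · exact hθ.oVec_vecMul_gammaMat a b c x ▸ hθ.onOvoid_oVec ..
  · apply vec7_ext <;> simp [torusMat]
  · exact hθ.oVec_vecMul_torusMat a b c hl ▸ (hθ.onOvoid_oVec ..).smul _
  · rw [vecMul_ups, ← neg_one_smul K]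
    exact hv.comp_rev.smul _

end Preservation

section PointAction

variable {K : Type*} [Field K]

lemma ptAct_mk_eq_mk_iff (g : GL (Fin 7) K) {v w : Fin 7 → K} (hv : v ≠ 0) (hw : w ≠ 0) :
    ptAct g (.mk K v hv) = .mk K w hw ↔
      ∃ k : Kˣ, k • w = v ᵥ* (g : Matrix (Fin 7) (Fin 7) K) :=
  Projectivization.mk_eq_mk_iff ..

lemma ptAct_mk_eq_mk_iff_natRep {t : ℕ} (g : ReeGroup (F := K) t) {v w : Fin 7 → K} (hv : v ≠ 0)
    (hw : w ≠ 0) :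
    ptAct g.1 (.mk K v hv) = .mk K w hw ↔ ∃ k : Kˣ, k • w = v ᵥ* natRep t g :=
  ptAct_mk_eq_mk_iff ..

lemma ptAct_one (P : Projectivization K (Fin 7 → K)) : ptAct 1 P = P := by
  induction P using Projectivization.ind with
  | h v hv => exact (ptAct_mk_eq_mk_iff 1 hv hv).2 ⟨1, by simp⟩

lemma ptAct_mul (g h : GL (Fin 7) K) (P : Projectivization K (Fin 7 → K)) :
    ptAct (g * h) P = ptAct h (ptAct g P) := by
  induction P using Projectivization.ind with
  | h v hv =>
    exact (ptAct_mk_eq_mk_iff ..).2 ⟨1, (one_smul ..).trans (vecMul_vecMul v g.1 h.1)⟩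

lemma ptAct_inv_ptAct (g : GL (Fin 7) K) (P : Projectivization K (Fin 7 → K)) :
    ptAct g⁻¹ (ptAct g P) = P := by
  rw [← ptAct_mul, mul_inv_cancel, ptAct_one]

lemma ptAct_ptAct_inv (g : GL (Fin 7) K) (P : Projectivization K (Fin 7 → K)) :
    ptAct g (ptAct g⁻¹ P) = P := by
  rw [← ptAct_mul, inv_mul_cancel, ptAct_one]

lemma Pinf_eq_mk_single :
    (Pinf : Projectivization K (Fin 7 → K)) = .mk K (Pi.single 6 1) (by simp) := by
  rw [Pinf]
  congr 1
  apply vec7_ext <;> simp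

lemma Pzero_eq_mk_single :
    (Pzero : Projectivization K (Fin 7 → K)) = .mk K (Pi.single 0 1) (by simp) := by
  rw [Pzero]
  congr 1
  apply vec7_ext <;> simp

lemma ptAct_upsElt_Pinf (t : ℕ) : ptAct (upsElt (K := K) t).1 Pinf = Pzero :=
  (ptAct_mk_eq_mk_iff _ _ _).2 ⟨-1, .trans (by apply vec7_ext <;> simp) (vecMul_ups _).symm⟩

lemma ptAct_upsElt_Pzero (t : ℕ) : ptAct (upsElt (K := K) t).1 Pzero = Pinf :=
  (ptAct_mk_eq_mk_iff _ _ _).2 ⟨-1, .trans (by apply vec7_ext <;> simp) (vecMul_ups _).symm⟩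

/-- The paper's `S(a, b, c) = α(a) β(b) γ(c)` as an element of the Ree group. -/
def unipotentElt (t : ℕ) (a b c : K) : ReeGroup (F := K) t :=
  alphaElt t a * betaElt t b * gammaElt t c

lemma IsTitsAut.ptAct_unipotentElt_Pinf {t : ℕ} {θ : K ≃+* K} (hθ : IsTitsAut t θ) (a b c : K) :
    ptAct (unipotentElt t a b c).1 Pinf = Pinf := by
  refine (ptAct_mk_eq_mk_iff_natRep ..).2 ⟨1, ?_⟩
  simp only [unipotentElt, map_mul, ← vecMul_vecMul, hθ.natRep_alphaElt, hθ.natRep_betaElt,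
    hθ.natRep_gammaElt, vecMul_alphaMat, vecMul_betaMat, vecMul_gammaMat]
  simp

end PointAction

section TwoTransitivity

variable {F : Type*} [Field F] [Fintype F]

/-- The point of `O` with parameters `a, b, c`. -/
def ovoidPt (t : ℕ) (a b c : F) : Projectivization F (Fin 7 → F) :=
  .mk F (oVec t a b c) (oVec_ne_zero t a b c)

lemma ovoidPt_mem_Oset (t : ℕ) (a b c : F) : ovoidPt t a b c ∈ Oset t :=
  .inr ⟨a, b, c, rfl⟩

lemma Pinf_mem_Oset (t : ℕ) : Pinf ∈ Oset (F := F) t :=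
  .inl rfl

variable {t : ℕ} {θ : F ≃+* F} (hθ : IsTitsAut t θ)

include hθ

lemma IsTitsAut.mk_mem_Oset_iff [CharP F 3] {v : Fin 7 → F} (hv : v ≠ 0) :
    Projectivization.mk F v hv ∈ Oset t ↔ OnOvoid θ v := by
  rw [hθ.onOvoid_iff, Oset, Set.mem_union, Set.mem_singleton_iff, Pinf_eq_mk_single,
    Projectivization.mk_eq_mk_iff']
  refine or_congr (exists_congr fun k => ?_) ⟨?_, ?_⟩
  · rw [eq_comm, ← Pi.single_smul, smul_eq_mul, mul_one]
  · rintro ⟨a, b, c, h⟩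
    obtain ⟨k, hk⟩ := (Projectivization.mk_eq_mk_iff' ..).1 h
    exact ⟨k, a, b, c, hk.symm⟩
  · rintro ⟨k, a, b, c, hk⟩
    exact ⟨a, b, c, (Projectivization.mk_eq_mk_iff' ..).2 ⟨k, hk.symm⟩⟩

lemma IsTitsAut.ptAct_mem_Oset [CharP F 3] (g : ReeGroup (F := F) t)
    {P : Projectivization F (Fin 7 → F)} (hP : P ∈ Oset t) : ptAct g.1 P ∈ Oset t := by
  induction P using Projectivization.ind with
  | h v hv => exact (hθ.mk_mem_Oset_iff _).2 <| hθ.onOvoid_vecMul g <| (hθ.mk_mem_Oset_iff _).1 hP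

lemma IsTitsAut.ovoidPt_zero : ovoidPt t 0 0 0 = (Pzero : Projectivization F (Fin 7 → F)) := by
  rw [ovoidPt, Pzero]
  congr 1
  rw [hθ.oVec_eq]
  apply vec7_ext <;> simp [ovoidRow]

lemma IsTitsAut.ptAct_unipotentElt_Pzero [CharP F 3] (a b c : F) :
    ptAct (unipotentElt t a b c).1 Pzero = ovoidPt t a b c := by
  rw [← hθ.ovoidPt_zero]
  refine (ptAct_mk_eq_mk_iff_natRep ..).2 ⟨1, ?_⟩
  simp only [unipotentElt, map_mul, ← vecMul_vecMul, hθ.natRep_alphaElt, hθ.natRep_betaElt,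
    hθ.natRep_gammaElt, hθ.oVec_vecMul_alphaMat, hθ.oVec_vecMul_betaMat, hθ.oVec_vecMul_gammaMat]
  simp

lemma IsTitsAut.exists_ptAct_Pinf_eq [CharP F 3] {P : Projectivization F (Fin 7 → F)}
    (hP : P ∈ Oset t) : ∃ x : ReeGroup (F := F) t, ptAct x.1 Pinf = P := by
  obtain rfl | ⟨a, b, c, rfl⟩ := hP
  · exact ⟨1, ptAct_one _⟩
  · refine ⟨upsElt t * unipotentElt t a b c, ?_⟩
    rw [Subgroup.coe_mul, ptAct_mul, ptAct_upsElt_Pinf, hθ.ptAct_unipotentElt_Pzero, ovoidPt]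

lemma IsTitsAut.exists_ptAct_Pinf_eq_and_ptAct_Pzero_eq [CharP F 3]
    {P Q : Projectivization F (Fin 7 → F)} (hP : P ∈ Oset t) (hQ : Q ∈ Oset t) (hPQ : P ≠ Q) :
    ∃ x : ReeGroup (F := F) t, ptAct x.1 Pinf = P ∧ ptAct x.1 Pzero = Q := by
  obtain ⟨y, rfl⟩ := hθ.exists_ptAct_Pinf_eq hP
  have hQ' := hθ.ptAct_mem_Oset y⁻¹ hQ
  rw [Subgroup.coe_inv] at hQ'
  obtain hQ' | ⟨a, b, c, hQ'⟩ := hQ'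
  · rw [Set.mem_singleton_iff] at hQ'
    exact absurd (hQ' ▸ ptAct_ptAct_inv y.1 Q) hPQ
  · refine ⟨unipotentElt t a b c * y, ?_, ?_⟩
    · rw [Subgroup.coe_mul, ptAct_mul, hθ.ptAct_unipotentElt_Pinf]
    · rw [Subgroup.coe_mul, ptAct_mul, hθ.ptAct_unipotentElt_Pzero, ovoidPt, ← hQ',
        ptAct_ptAct_inv]

end TwoTransitivity

section Stabilizer

variable {F : Type*} [Field F] [Finite F] [CharP F 3] {t : ℕ} {θ : F ≃+* F} (hθ : IsTitsAut t θ)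

include hθ

lemma IsTitsAut.exists_eq_torusHom (hne : θ ≠ RingEquiv.refl F) {g : ReeGroup (F := F) t}
    (hinf : ptAct g.1 Pinf = Pinf) (hzero : ptAct g.1 Pzero = Pzero) : ∃ l, g = torusHom t l := by
  rw [Pinf_eq_mk_single, ptAct_mk_eq_mk_iff_natRep] at hinf
  rw [Pzero_eq_mk_single, ptAct_mk_eq_mk_iff_natRep] at hzero
  obtain ⟨k', h6⟩ := hinf
  obtain ⟨k, h0⟩ := hzero
  rw [single_one_vecMul, Units.smul_def, ← Pi.single_smul, smul_eq_mul, mul_one] at h0 h6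
  obtain ⟨p, q, r, s, hk, hg⟩ := (hθ.preservesCross g).eq_leviMat k.ne_zero h0.symm h6.symm
  obtain ⟨l, hl, h⟩ := hθ.eq_torusMat_of_onOvoid hne (hk ▸ k.ne_zero) fun a b c =>
    hg ▸ hθ.onOvoid_vecMul g (hθ.onOvoid_oVec a b c)
  exact ⟨.mk0 l hl, natRep_injective t <| by rw [hg, h, hθ.natRep_torusHom, Units.val_mk0]⟩

end Stabilizer

section Involutions

variable {F : Type*} [Field F] [CharP F 3] {t : ℕ} {θ : F ≃+* F} (hθ : IsTitsAut t θ)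

include hθ

lemma IsTitsAut.eq_one_of_forall_ptAct_eq [Fintype F] (hne : θ ≠ RingEquiv.refl F)
    {g : ReeGroup (F := F) t} (h : ∀ P ∈ Oset t, ptAct g.1 P = P) : g = 1 := by
  obtain ⟨l, rfl⟩ := hθ.exists_eq_torusHom hne (h _ (Pinf_mem_Oset t))
    (h _ (hθ.ovoidPt_zero ▸ ovoidPt_mem_Oset t 0 0 0))
  obtain ⟨k, hk⟩ := (ptAct_mk_eq_mk_iff_natRep ..).1 (h _ (ovoidPt_mem_Oset t 0 0 1))
  rw [hθ.oVec_eq, hθ.natRep_torusHom, vecMul_torusMat] at hk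
  have h0 := congrFun hk 0
  have h3 := congrFun hk 3
  simp only [ovoidRow, Units.smul_def, Pi.smul_apply, smul_eq_mul, cons_val, map_zero, map_one,
    mul_zero, zero_sub, mul_one, one_mul] at h0 h3
  obtain rfl : l = 1 := by
    rw [← Units.val_eq_one, ← map_eq_one_iff θ θ.injective]
    linear_combination -h0 - h3
  exact map_one _

lemma IsTitsAut.exists_isConj_torusHom_mul_upsElt [Finite F] (hne : θ ≠ RingEquiv.refl F)
    {g : ReeGroup (F := F) t} (hg : g ≠ 1) (hgg : g * g = 1) :
    ∃ l, IsConj g (torusHom t l * upsElt t) := by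
  cases nonempty_fintype F
  obtain ⟨P, hP, hgP⟩ : ∃ P ∈ Oset t, ptAct g.1 P ≠ P := by
    contrapose! hg
    exact hθ.eq_one_of_forall_ptAct_eq hne hg
  obtain ⟨x, hx, hx'⟩ :=
    hθ.exists_ptAct_Pinf_eq_and_ptAct_Pzero_eq hP (hθ.ptAct_mem_Oset g hP) hgP.symm
  have swap : ptAct (x * g * x⁻¹).1 Pinf = Pzero := by
    simp only [Subgroup.coe_mul, Subgroup.coe_inv, ptAct_mul, hx, ← hx', ptAct_inv_ptAct]
  have swap' : ptAct (x * g * x⁻¹).1 Pzero = Pinf := by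
    rw [← swap, ← ptAct_mul, ← Subgroup.coe_mul]
    have hgg' : x * g * x⁻¹ * (x * g * x⁻¹) = 1 := by
      rw [conj_mul, hgg, mul_one, mul_inv_cancel]
    rw [hgg', Subgroup.coe_one, ptAct_one]
  obtain ⟨l, hl⟩ := hθ.exists_eq_torusHom hne (g := x * g * x⁻¹ * upsElt t)
    (by rw [Subgroup.coe_mul, ptAct_mul, swap, ptAct_upsElt_Pzero])
    (by rw [Subgroup.coe_mul, ptAct_mul, swap', ptAct_upsElt_Pinf])
  refine ⟨l, isConj_iff.2 ⟨x, ?_⟩⟩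
  rw [← hl, mul_assoc _ (upsElt t), upsElt_mul_upsElt, mul_one]

lemma IsTitsAut.isConj_torusHom_neg_one [Fintype F] (hF : 3 < Fintype.card F)
    {g : ReeGroup (F := F) t} (hg : g ≠ 1) (hgg : g * g = 1) : IsConj (torusHom t (-1)) g := by
  obtain ⟨l, hl⟩ := hθ.exists_isConj_torusHom_mul_upsElt (hθ.ne_refl hF) hg hgg
  exact (hθ.isConj_torusHom_neg_one_torusHom_mul_upsElt l).trans hl.symm

end Involutions

section TorusAction

variable {K : Type*} [Field K] {t : ℕ} {θ : K ≃+* K} (hθ : IsTitsAut t θ)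

include hθ

lemma IsTitsAut.ptAct_torusHom_Pinf (l : Kˣ) : ptAct (torusHom t l).1 Pinf = Pinf := by
  refine (ptAct_mk_eq_mk_iff_natRep ..).2 ⟨(Units.map θ l)⁻¹, ?_⟩
  rw [hθ.natRep_torusHom, vecMul_torusMat]
  apply vec7_ext <;> simp [Units.smul_def]

lemma IsTitsAut.ptAct_torusHom_ovoidPt [Fintype K] (l : Kˣ) (a b c : K) :
    ptAct (torusHom t l).1 (ovoidPt t a b c) =
      ovoidPt t (a * (θ l ^ 3 / l ^ 2)) (b * (l / θ l ^ 3)) (c / l) := by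
  refine (ptAct_mk_eq_mk_iff_natRep ..).2 ⟨Units.map θ l, ?_⟩
  rw [hθ.natRep_torusHom, hθ.oVec_vecMul_torusMat a b c l.ne_zero]
  rfl

lemma IsTitsAut.ptAct_torusHom_neg_one_ovoidPt [Fintype K] (a b c : K) :
    ptAct (torusHom t (-1)).1 (ovoidPt t a b c) = ovoidPt t (-a) b (-c) := by
  rw [hθ.ptAct_torusHom_ovoidPt]
  congr 1 <;> simp [Odd.neg_one_pow (n := 3) (by decide), div_neg]

end TorusAction

section FixedPoints

variable {F : Type*} [Field F] [Fintype F]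

lemma ovoidPt_ne_Pinf (t : ℕ) (a b c : F) : ovoidPt t a b c ≠ Pinf := by
  rw [ovoidPt, Pinf, Ne, Projectivization.mk_eq_mk_iff']
  rintro ⟨k, hk⟩
  simpa [oVec] using congrFun hk 0

/-- The points of `O` fixed by `g`. -/
def fixedPts (t : ℕ) (g : GL (Fin 7) F) : Set (Projectivization F (Fin 7 → F)) :=
  {P ∈ Oset t | ptAct g P = P}

lemma IsTitsAut.ovoidPt_inj {t : ℕ} {θ : F ≃+* F} (hθ : IsTitsAut t θ) {a b c a' b' c' : F} :
    ovoidPt t a b c = ovoidPt t a' b' c' ↔ a = a' ∧ b = b' ∧ c = c' := by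
  refine ⟨fun h => ?_, by rintro ⟨rfl, rfl, rfl⟩; rfl⟩
  obtain ⟨k, hk⟩ := (Projectivization.mk_eq_mk_iff' ..).1 h
  obtain rfl : k = 1 := by simpa [oVec] using congrFun hk 0
  rw [one_smul, hθ.oVec_eq, hθ.oVec_eq] at hk
  obtain rfl : a' = a := by simpa [ovoidRow] using congrFun hk 1
  obtain rfl : b' = b := by simpa [ovoidRow] using congrFun hk 2
  obtain rfl : c' = c := by simpa [ovoidRow] using congrFun hk 3
  exact ⟨rfl, rfl, rfl⟩

variable [CharP F 3] {t : ℕ} {θ : F ≃+* F} (hθ : IsTitsAut t θ)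

include hθ

lemma IsTitsAut.ncard_fixedPts_eq_of_isConj {g h : ReeGroup (F := F) t} (hgh : IsConj g h) :
    (fixedPts t g.1).ncard = (fixedPts t h.1).ncard := by
  obtain ⟨x, rfl⟩ := isConj_iff.1 hgh
  refine (Set.ncard_congr (fun P _ => ptAct (x⁻¹).1 P) ?_ ?_ ?_)
  · rintro P ⟨hP, hgP⟩
    refine ⟨hθ.ptAct_mem_Oset x⁻¹ hP, ?_⟩
    simp only [Subgroup.coe_mul, Subgroup.coe_inv, ptAct_mul, ptAct_ptAct_inv, hgP]
  · intro P Q _ _ hPQ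
    simpa only [Subgroup.coe_inv, ptAct_ptAct_inv] using congrArg (ptAct x.1) hPQ
  · rintro Q ⟨hQ, hgQ⟩
    refine ⟨ptAct x.1 Q, ⟨hθ.ptAct_mem_Oset x hQ, ?_⟩, ptAct_inv_ptAct _ _⟩
    simp only [Subgroup.coe_mul, Subgroup.coe_inv, ptAct_mul] at hgQ
    conv_rhs => rw [← hgQ]
    rw [ptAct_ptAct_inv]

lemma IsTitsAut.fixedPts_torusHom_neg_one :
    fixedPts t (torusHom (K := F) t (-1)).1 = insert Pinf (Set.range fun b => ovoidPt t 0 b 0) := by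
  have neg_eq_self_iff {x : F} : -x = x ↔ x = 0 := by grind
  ext P
  constructor
  · rintro ⟨rfl | ⟨a, b, c, rfl⟩, hP⟩
    · exact .inl rfl
    · obtain ⟨ha, -, hc⟩ :=
        hθ.ovoidPt_inj.1 ((hθ.ptAct_torusHom_neg_one_ovoidPt a b c).symm.trans hP)
      obtain rfl := neg_eq_self_iff.1 ha
      obtain rfl := neg_eq_self_iff.1 hc
      exact .inr ⟨b, rfl⟩
  · rintro (rfl | ⟨b, rfl⟩)
    · exact ⟨Pinf_mem_Oset t, hθ.ptAct_torusHom_Pinf _⟩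
    · refine ⟨ovoidPt_mem_Oset t 0 b 0, ?_⟩
      simp only [hθ.ptAct_torusHom_neg_one_ovoidPt, neg_zero]

lemma IsTitsAut.ncard_fixedPts_torusHom_neg_one :
    (fixedPts t (torusHom (K := F) t (-1)).1).ncard = Fintype.card F + 1 := by
  rw [hθ.fixedPts_torusHom_neg_one, Set.ncard_insert_of_notMem, Set.ncard_range_of_injective,
    Nat.card_eq_fintype_card]
  · exact fun b b' h => (hθ.ovoidPt_inj.1 h).2.1
  · rintro ⟨b, hb⟩
    exact ovoidPt_ne_Pinf _ _ _ _ hb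

end FixedPoints

lemma isTitsAut_iterateFrobeniusEquiv (m : ℕ) {F : Type*} [Field F] [Fintype F] [CharP F 3]
    (hF : Fintype.card F = 3 ^ (2 * m + 1)) :
    IsTitsAut (3 ^ m) (iterateFrobeniusEquiv F 3 m) where
  apply_eq_pow x := rfl
  apply_apply_pow_three x := by
    simp only [iterateFrobeniusEquiv_def, ← pow_mul, ← pow_add, ← pow_succ, ← two_mul]
    rw [← hF, FiniteField.pow_card]

end ReePaper

/-- All involutions of `Ree(q)` are conjugate in `Ree(q)`, and every involution fixes
exactly `q + 1` points of `O`. -/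
theorem involutions_conjugate_and_fixed_points (m : ℕ) (hm : 0 < m) (F : Type*) [Field F] [Fintype F]
    (hF : Fintype.card F = 3 ^ (2 * m + 1)) :
    (∀ g₁ g₂ : GL (Fin 7) F, g₁ ∈ ReeGroup (F := F) (3 ^ m) → g₂ ∈ ReeGroup (F := F) (3 ^ m) →
      orderOf g₁ = 2 → orderOf g₂ = 2 →
      ∃ x ∈ ReeGroup (F := F) (3 ^ m), x⁻¹ * g₁ * x = g₂) ∧
    (∀ g : GL (Fin 7) F, g ∈ ReeGroup (F := F) (3 ^ m) → orderOf g = 2 →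
      {P ∈ Oset (F := F) (3 ^ m) | ptAct g P = P}.ncard = 3 ^ (2 * m + 1) + 1) := by
  have : CharP F 3 := charP_of_card_eq_prime_pow hF
  have hθ := isTitsAut_iterateFrobeniusEquiv m hF
  have hcard : 3 < Fintype.card F := hF ▸ lt_self_pow₀ (by norm_num) (by omega)
  have conj (g : GL (Fin 7) F) (hg : g ∈ ReeGroup (3 ^ m)) (hord : orderOf g = 2) :
      IsConj (torusHom (3 ^ m) (-1)) ⟨g, hg⟩ := by
    obtain ⟨hgg, hg1⟩ := orderOf_eq_prime_iff.1 hord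
    exact hθ.isConj_torusHom_neg_one hcard (fun h => hg1 (congrArg Subtype.val h))
      (Subtype.ext ((sq g).symm.trans hgg))
  refine ⟨fun g₁ g₂ hg₁ hg₂ ho₁ ho₂ => ?_, fun g hg ho => ?_⟩
  · obtain ⟨x, hx⟩ := isConj_iff.1 ((conj g₂ hg₂ ho₂).symm.trans (conj g₁ hg₁ ho₁)).symm
    refine ⟨x⁻¹.1, x⁻¹.2, ?_⟩
    simpa using congrArg Subtype.val hx
  · rw [← hF, ← hθ.ncard_fixedPts_torusHom_neg_one]
    exact (hθ.ncard_fixedPts_eq_of_isConj (conj g hg ho)).symm
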